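/- Let n ≥ 1 and 1 ≤ k ≤ n. For every ν ∈ B(A_n,k) with ν ≠ μ̄, writing μ̄ − ν = Σ_{i=1}^n d_i α_i^∨, one has d_k ≥ 1/2; consequently (μ̄ − (1/2)α_k^∨) − ν is a nonnegative rational combination of the simple coroots α_1^∨,…,α_n^∨, i.e. μ̄ − (1/2)α_k^∨ is the greatest element of B(A_n,k) ∖ {μ̄} in the dominance order. -/

import Mathlib

open Finset

/-- The Galois average `μ̄` of the minuscule cocharacter at the (1-indexed) node `k` in
type `A_n`, viewed as the fundamental coweight in `ℚ^{n+1}`: the coordinate `j : Fin (n+1)`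
corresponds to the 1-indexed coordinate `j + 1`, and
`μ̄ = Σ_{j=1}^{k} e_j − (k/(n+1)) Σ_{j=1}^{n+1} e_j`. -/
def muA (n k : ℕ) : Fin (n + 1) → ℚ :=
  fun j => (if (j : ℕ) + 1 ≤ k then 1 else 0) - (k : ℚ) / (n + 1)

/-- The simple coroot `α_{i+1}^∨ = e_{i+1} − e_{i+2}` (1-indexed) of type `A_n`. -/
def corootA (n : ℕ) (i : Fin n) : Fin (n + 1) → ℚ :=
  fun j => (if (j : ℕ) = (i : ℕ) then 1 else 0) - (if (j : ℕ) = (i : ℕ) + 1 then 1 else 0)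

/-- The Chen–Fargues–Shen description of the Kottwitz set `B(A_n, k)`: vectors `ν ∈ ℚ^{n+1}`
such that (i) `ν` is dominant, (ii) `μ̄ − ν = Σ_i d_i α_i^∨` with all `d_i ≥ 0`, and
(iii) `d_i ∈ ℤ` whenever `ν_i ≠ ν_{i+1}`. -/
def BsetA (n k : ℕ) : Set (Fin (n + 1) → ℚ) :=
  {ν | (∀ i : Fin n, ν i.succ ≤ ν i.castSucc) ∧
    ∃ d : Fin n → ℚ, (∀ i, 0 ≤ d i) ∧
      (∀ j, muA n k j - ν j = ∑ i : Fin n, d i * corootA n i j) ∧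
      (∀ i : Fin n, ν i.castSucc ≠ ν i.succ → ∃ m : ℤ, d i = (m : ℚ))}

/-!
Put `d_0 = d_{n+1} = 0`. The pairing of `μ̄ − ν` with `α_j` is the second difference
`2 d_j − d_{j-1} − d_{j+1}`, while `μ̄` pairs to `1` with `α_k` and to `0` with the other simple
roots. If `ν_k = ν_{k+1}`, then `2 d_k = 1 + d_{k-1} + d_{k+1} ≥ 1`. Otherwise `d_k` is a
nonnegative integer, and it is not `0`: dominance of `ν` makes `d` convex on `[0, k]` and on
`[k, n+1]`, so if `d_k = 0` the maximum principle gives `d = 0`, that is `ν = μ̄`.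
-/

section MaximumPrinciple

variable {M : Type*} [AddCommMonoid M] [LinearOrder M] [IsOrderedCancelAddMonoid M]

theorem le_max_endpoints_of_add_self_le_add {f : ℕ → M} {a b : ℕ}
    (hf : ∀ m, a ≤ m → m + 2 ≤ b → f (m + 1) + f (m + 1) ≤ f m + f (m + 2))
    {m : ℕ} (ham : a ≤ m) (hmb : m ≤ b) : f m ≤ max (f a) (f b) := by
  induction b, ham.trans hmb using Nat.le_induction generalizing m with
  | base => simp [le_antisymm hmb ham]
  | succ b hab ih =>
    have ih {m : ℕ} (ham : a ≤ m) (hmb : m ≤ b) : f m ≤ max (f a) (f b) :=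
      ih (fun l hal hlb ↦ hf l hal (by omega)) ham hmb
    have hfb : f b ≤ max (f a) (f (b + 1)) := by
      rcases le_or_gt (f b) (f a) with hba | hba
      · exact le_max_of_le_left hba
      have hab' : a < b := hab.lt_of_ne (by rintro rfl; exact lt_irrefl _ hba)
      obtain ⟨l, rfl⟩ : ∃ l, b = l + 1 := Nat.exists_eq_add_one_of_ne_zero (Nat.ne_zero_of_lt hab')
      have hal : a ≤ l := Nat.le_of_lt_succ hab'
      have hl : f l ≤ f (l + 1) := by simpa [hba.le] using ih hal l.le_succ
      have hadd : f (l + 1) + f (l + 1) ≤ f (l + 1) + f (l + 2) :=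
        (hf l hal le_rfl).trans (add_le_add_left hl _)
      exact le_max_of_le_right (le_of_add_le_add_left hadd)
    rcases hmb.lt_or_eq with hlt | rfl
    · exact (ih ham (Nat.le_of_lt_succ hlt)).trans (max_le (le_max_left _ _) hfb)
    · exact le_max_right _ _

theorem eq_zero_of_add_self_le_add {f : ℕ → M} {a b : ℕ} (hf₀ : ∀ m, 0 ≤ f m)
    (hf : ∀ m, a ≤ m → m + 2 ≤ b → f (m + 1) + f (m + 1) ≤ f m + f (m + 2))
    (ha : f a = 0) (hb : f b = 0) {m : ℕ} (ham : a ≤ m) (hmb : m ≤ b) : f m = 0 :=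
  le_antisymm (by simpa [ha, hb] using le_max_endpoints_of_add_self_le_add hf ham hmb) (hf₀ m)

end MaximumPrinciple

section ZeroPad

variable {M : Type*} {n : ℕ}

/-- The sequence `0, d_1, …, d_n, 0, 0, …`: the coefficients of a combination of the simple
coroots, indexed from `1` as in the paper, with the boundary convention `d_0 = d_{n+1} = 0`. -/
def zeroPad [Zero M] (d : Fin n → M) : ℕ → M
  | 0 => 0
  | m + 1 => if h : m < n then d ⟨m, h⟩ else 0

@[simp]
theorem zeroPad_zero [Zero M] (d : Fin n → M) : zeroPad d 0 = 0 := rfl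

@[simp]
theorem zeroPad_val_add_one [Zero M] (d : Fin n → M) (i : Fin n) :
    zeroPad d (i + 1) = d i := by
  simp [zeroPad]

@[simp]
theorem zeroPad_length_add_one [Zero M] (d : Fin n → M) : zeroPad d (n + 1) = 0 := by
  simp [zeroPad]

theorem zeroPad_nonneg [Zero M] [Preorder M] {d : Fin n → M} (hd : ∀ i, 0 ≤ d i) (m : ℕ) :
    0 ≤ zeroPad d m := by
  cases m with
  | zero => exact le_rfl
  | succ m => simp only [zeroPad]; split_ifs <;> simp [hd]

theorem sum_mul_ite_eq_zeroPad [NonAssocSemiring M] (d : Fin n → M) (m : ℕ) :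
    ∑ i : Fin n, d i * (if m = (i : ℕ) + 1 then 1 else 0) = zeroPad d m := by
  cases m with
  | zero => simp
  | succ m =>
    by_cases hm : m < n
    · lift m to Fin n using hm
      simp [← Fin.ext_iff]
    · have hne (i : Fin n) : m ≠ i := by omega
      simp [zeroPad, hm, hne]

end ZeroPad

theorem sum_mul_corootA {n : ℕ} (d : Fin n → ℚ) (j : Fin (n + 1)) :
    ∑ i : Fin n, d i * corootA n i j = zeroPad d (j + 1) - zeroPad d j := by
  simp only [← sum_mul_ite_eq_zeroPad, ← Finset.sum_sub_distrib, ← mul_sub, corootA,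
    Nat.add_right_cancel_iff]

theorem linearIndependent_corootA (n : ℕ) : LinearIndependent ℚ (corootA n) := by
  refine Fintype.linearIndependent_iff.2 fun d hd i ↦ ?_
  have hstep (j : Fin (n + 1)) : zeroPad d (j + 1) = zeroPad d j := by
    have hj := congrFun hd j
    simp only [Finset.sum_apply, Pi.smul_apply, smul_eq_mul, sum_mul_corootA] at hj
    exact sub_eq_zero.1 hj
  have hzero (m : ℕ) (hm : m ≤ n) : zeroPad d m = 0 := by
    induction m with
    | zero => rfl
    | succ m ih => exact (hstep ⟨m, by omega⟩).trans (ih (by omega))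
  simpa using hzero (i + 1) i.isLt

theorem eq_of_sum_mul_corootA_eq {n : ℕ} {d e : Fin n → ℚ}
    (h : ∀ j, ∑ i : Fin n, d i * corootA n i j = ∑ i : Fin n, e i * corootA n i j) : d = e := by
  refine (linearIndependent_corootA n).fintypeLinearCombination_injective (funext fun j ↦ ?_)
  simpa [Fintype.linearCombination_apply] using h j

theorem muA_castSucc_sub_succ {n : ℕ} (k : ℕ) (j : Fin n) :
    muA n k j.castSucc - muA n k j.succ = if (j : ℕ) + 1 = k then 1 else 0 := by
  simp only [muA, Fin.val_castSucc, Fin.val_succ]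
  split_ifs <;> first | omega | ring

section Coefficients

variable {n k : ℕ} {ν : Fin (n + 1) → ℚ} {d : Fin n → ℚ}

theorem castSucc_sub_succ_eq_add_second_difference
    (hd : ∀ j, muA n k j - ν j = ∑ i : Fin n, d i * corootA n i j) (j : Fin n) :
    ν j.castSucc - ν j.succ =
      (if (j : ℕ) + 1 = k then 1 else 0) + zeroPad d j + zeroPad d (j + 2) - 2 * d j := by
  have hcast := hd j.castSucc
  have hsucc := hd j.succ
  simp only [sum_mul_corootA, Fin.val_castSucc, Fin.val_succ, zeroPad_val_add_one] at hcast hsucc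
  linarith [muA_castSucc_sub_succ k j]

theorem zeroPad_add_self_le_add (hν : ∀ j : Fin n, ν j.succ ≤ ν j.castSucc)
    (hd : ∀ j, muA n k j - ν j = ∑ i : Fin n, d i * corootA n i j)
    {m : ℕ} (hmn : m < n) (hmk : m + 1 ≠ k) :
    zeroPad d (m + 1) + zeroPad d (m + 1) ≤ zeroPad d m + zeroPad d (m + 2) := by
  lift m to Fin n using hmn
  have hpair := castSucc_sub_succ_eq_add_second_difference hd m
  rw [if_neg hmk] at hpair
  rw [zeroPad_val_add_one]
  linarith [hν m]

theorem eq_muA_of_zeroPad_eq_zero (hkn : k ≤ n + 1)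
    (hν : ∀ j : Fin n, ν j.succ ≤ ν j.castSucc) (hd₀ : ∀ i, 0 ≤ d i)
    (hd : ∀ j, muA n k j - ν j = ∑ i : Fin n, d i * corootA n i j)
    (hk : zeroPad d k = 0) : ν = muA n k := by
  have hzero (m : ℕ) (hm : m ≤ n + 1) : zeroPad d m = 0 := by
    rcases le_total m k with hmk | hkm
    · exact eq_zero_of_add_self_le_add (zeroPad_nonneg hd₀)
        (fun l _ hl ↦ zeroPad_add_self_le_add hν hd (by omega) (by omega))
        (zeroPad_zero d) hk m.zero_le hmk
    · exact eq_zero_of_add_self_le_add (zeroPad_nonneg hd₀)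
        (fun l hl _ ↦ zeroPad_add_self_le_add hν hd (by omega) (by omega))
        hk (zeroPad_length_add_one d) hkm hm
  funext j
  have hj := hd j
  rw [sum_mul_corootA, hzero _ (by omega), hzero _ (by omega), sub_zero] at hj
  exact (sub_eq_zero.1 hj).symm

theorem half_le_coeff_of_castSucc_eq_succ {i : Fin n} (hd₀ : ∀ j, 0 ≤ d j)
    (hd : ∀ j, muA n (i + 1) j - ν j = ∑ l : Fin n, d l * corootA n l j)
    (hνi : ν i.castSucc = ν i.succ) : 1 / 2 ≤ d i := by
  have hpair := castSucc_sub_succ_eq_add_second_difference hd i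
  rw [if_pos rfl, hνi, sub_self] at hpair
  linarith [zeroPad_nonneg hd₀ i, zeroPad_nonneg hd₀ (i + 2)]

theorem one_le_coeff_of_eq_intCast {i : Fin n} (hν : ∀ j : Fin n, ν j.succ ≤ ν j.castSucc)
    (hd₀ : ∀ j, 0 ≤ d j)
    (hd : ∀ j, muA n (i + 1) j - ν j = ∑ l : Fin n, d l * corootA n l j)
    (hne : ν ≠ muA n (i + 1)) {z : ℤ} (hz : d i = z) : 1 ≤ d i := by
  have hdi : d i ≠ 0 := fun h ↦
    hne (eq_muA_of_zeroPad_eq_zero (by omega) hν hd₀ hd (by rwa [zeroPad_val_add_one]))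
  have hpos : 0 < d i := (hd₀ i).lt_of_ne' hdi
  rw [hz] at hpos ⊢
  exact_mod_cast hpos

theorem muA_sub_half_coroot_maximal_general {i : Fin n}
    (hν : ∀ j : Fin n, ν j.succ ≤ ν j.castSucc) (hd₀ : ∀ j, 0 ≤ d j)
    (hd : ∀ j, muA n (i + 1) j - ν j = ∑ l : Fin n, d l * corootA n l j)
    (hint : ν i.castSucc ≠ ν i.succ → ∃ z : ℤ, d i = z) (hne : ν ≠ muA n (i + 1)) :
    1 / 2 ≤ d i ∧
      ∃ c : Fin n → ℚ, (∀ j, 0 ≤ c j) ∧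
        ∀ j, (muA n (i + 1) j - (1 / 2) * corootA n i j) - ν j
          = ∑ l : Fin n, c l * corootA n l j := by
  have hhalf : 1 / 2 ≤ d i := by
    by_cases hνi : ν i.castSucc = ν i.succ
    · exact half_le_coeff_of_castSucc_eq_succ hd₀ hd hνi
    · obtain ⟨z, hz⟩ := hint hνi
      linarith [one_le_coeff_of_eq_intCast hν hd₀ hd hne hz]
  refine ⟨hhalf, d - Pi.single i (1 / 2), fun j ↦ ?_, fun j ↦ ?_⟩
  · rcases eq_or_ne j i with rfl | hji
    · simpa using hhalf
    · simpa [hji] using hd₀ j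
  · simp only [Pi.sub_apply, sub_mul, Finset.sum_sub_distrib, ← hd, Pi.single_apply, ite_mul,
      zero_mul, Finset.sum_ite_eq', Finset.mem_univ, if_true]
    ring

end Coefficients

/-- Type `A_n`, `1 ≤ k ≤ n`: for every `ν ∈ B(A_n, k)` with `ν ≠ μ̄`, writing
`μ̄ − ν = Σ_i d_i α_i^∨` one has `d_k ≥ 1/2`, and consequently
`(μ̄ − (1/2) α_k^∨) − ν` is a nonnegative rational combination of the simple coroots,
i.e. `μ̄ − (1/2) α_k^∨` is the greatest element of `B(A_n, k) ∖ {μ̄}` in the dominance order. -/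
theorem muA_sub_half_coroot_maximal (n k : ℕ) (hn : 1 ≤ n) (hk1 : 1 ≤ k) (hkn : k ≤ n) :
    ∀ ν ∈ BsetA n k, ν ≠ muA n k →
      ∀ d : Fin n → ℚ,
        (∀ j, muA n k j - ν j = ∑ i : Fin n, d i * corootA n i j) →
        1 / 2 ≤ d ⟨k - 1, by omega⟩ ∧
        ∃ c : Fin n → ℚ, (∀ i, 0 ≤ c i) ∧
          ∀ j, (muA n k j - (1 / 2) * corootA n ⟨k - 1, by omega⟩ j) - ν j
            = ∑ i : Fin n, c i * corootA n i j := by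
  rintro ν ⟨hν, e, he₀, he, hint⟩ hne d hd
  obtain rfl : d = e := eq_of_sum_mul_corootA_eq fun j ↦ (hd j).symm.trans (he j)
  obtain ⟨i, rfl⟩ := Nat.exists_eq_add_one.2 hk1
  exact muA_sub_half_coroot_maximal_general (i := ⟨i, hkn⟩) hν he₀ hd (hint _) hne
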